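/- The family {S_w}_{w ∈ S_n} is a basis of R ⊗_{R^{S_n}} R as a free left R-module. -/

import Mathlib

open MvPolynomial

noncomputable section

/-- `R n` is the polynomial ring `ℂ[x_1, …, x_n]`. -/
abbrev R (n : ℕ) := MvPolynomial (Fin n) ℂ

/-- The inversion set of a permutation. -/
def invSet (n : ℕ) (w : Equiv.Perm (Fin n)) : Finset (Fin n × Fin n) :=
  Finset.univ.filter fun p => p.1 < p.2 ∧ w p.2 < w p.1

/-- The Coxeter length of a permutation, i.e. its number of inversions. -/
def len (n : ℕ) (w : Equiv.Perm (Fin n)) : ℕ := (invSet n w).card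

/-- `Δ_w = ∏_{(i,j) ∈ inv(w)} (x_i - x_j)`. -/
def Δpoly (n : ℕ) (w : Equiv.Perm (Fin n)) : R n :=
  ∏ p ∈ invSet n w, (X p.1 - X p.2)

/-- The simple reflection `s_j = (j, j+1)` (1-based `j` corresponds to 0-based index here);
for out-of-range indices we use the identity. -/
def simpleRefl (n : ℕ) (j : ℕ) : Equiv.Perm (Fin n) :=
  if hj : j + 1 < n then Equiv.swap ⟨j, Nat.lt_of_succ_lt hj⟩ ⟨j + 1, hj⟩ else 1

open Classical in
/-- The Demazure operator `∂_j = (id - s_j)/(x_j - x_{j+1})` on `R n`. -/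
def demX (n : ℕ) (j : ℕ) (h : R n) : R n :=
  if hj : j + 1 < n then
    let a : Fin n := ⟨j, Nat.lt_of_succ_lt hj⟩
    let b : Fin n := ⟨j + 1, hj⟩
    if hd : (X a - X b : R n) ∣ (h - rename (Equiv.swap a b) h) then hd.choose else 0
  else 0

/-- Composite Demazure operator along a word `[a_1, …, a_k]`:
`∂_{a_1} ∘ ⋯ ∘ ∂_{a_k}`. -/
def demWord (n : ℕ) (l : List ℕ) (h : R n) : R n := l.foldr (demX n) h

/-- `l` is a reduced word for `w`: `w = s_{a_1} ⋯ s_{a_k}` with `k = ℓ(w)`. -/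
def IsReducedWord (n : ℕ) (w : Equiv.Perm (Fin n)) (l : List ℕ) : Prop :=
  (l.map (simpleRefl n)).prod = w ∧ l.length = len n w

open Classical in
/-- The Demazure operator `∂_w` of a permutation, computed from a (choice of) reduced word;
it is independent of this choice. -/
def dem (n : ℕ) (w : Equiv.Perm (Fin n)) : R n → R n :=
  if h : ∃ l, IsReducedWord n w l then demWord n h.choose else id

/-- The longest element `w_0` of `S_n`. -/
def w₀ (n : ℕ) : Equiv.Perm (Fin n) := Fin.revPerm

/-- The staircase monomial `x_1^{n-1} x_2^{n-2} ⋯ x_{n-1}`. -/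
def staircase (n : ℕ) : R n := ∏ i : Fin n, X i ^ (n - 1 - (i : ℕ))

/-- The Schubert polynomial `𝔖_w(x) = ∂_{w⁻¹ w₀}(x_1^{n-1} ⋯ x_{n-1})`. -/
def schubert (n : ℕ) (w : Equiv.Perm (Fin n)) : R n := dem n (w⁻¹ * w₀ n) (staircase n)



open TensorProduct

/-- The subalgebra `R^{S_n} ⊆ R` of symmetric polynomials. -/
abbrev Ssub (n : ℕ) := MvPolynomial.symmetricSubalgebra (Fin n) ℂ

/-- The tensor product `R ⊗_{R^{S_n}} R`. -/
abbrev T (n : ℕ) := TensorProduct (Ssub n) (R n) (R n)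

/-- `rename w` as an `R^{S_n}`-algebra endomorphism of `R`. -/
def renameS (n : ℕ) (w : Equiv.Perm (Fin n)) : R n →ₐ[Ssub n] R n :=
  { (rename ⇑w : R n →ₐ[ℂ] R n) with
    commutes' := fun s => s.2 w }

/-- `F_w : R ⊗_{R^{S_n}} R → R_w`, the `R`-bimodule homomorphism `f ⊗ g ↦ f · (w·g)`
(the target `R_w` has underlying abelian group `R`). -/
def Fw (n : ℕ) (w : Equiv.Perm (Fin n)) : T n →ₐ[Ssub n] R n :=
  Algebra.TensorProduct.productMap (AlgHom.id (Ssub n) (R n)) (renameS n w)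

open Classical in
/-- `S_w = 1 ⊗ 𝔖_w(x) + Σ 𝔖_v(-x) ⊗ 𝔖_u(x)`, the sum over all factorizations `w = v⁻¹ u`
with `ℓ(u) < ℓ(w)` and `ℓ(w) = ℓ(v) + ℓ(u)`. -/
def Sw (n : ℕ) (w : Equiv.Perm (Fin n)) : T n :=
  (1 : R n) ⊗ₜ[Ssub n] schubert n w +
  ∑ p ∈ Finset.univ.filter
      (fun p : Equiv.Perm (Fin n) × Equiv.Perm (Fin n) =>
        w = p.2⁻¹ * p.1 ∧ len n p.1 < len n w ∧ len n w = len n p.2 + len n p.1),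
    (aeval (fun i => -(X i : R n)) (schubert n p.2)) ⊗ₜ[Ssub n] schubert n p.1


/-!
Moving a variable through `∂_w` gives the Leibniz rule
`∂_w (x_c f) = x_{w(c)} ∂_w f + ∑ ⟨x_c, α_{ij}^∨⟩ ∂_{w t_{ij}} f`, the sum running over the
inversions `(i, j)` of `w` with `ℓ(w t_{ij}) = ℓ(w) - 1`. The correction only involves shorter
permutations, so by induction on the length the operator along a reduced word of `w` is determined
by its commutators with the variables and its value on constants. Hence it does not depend on the
reduced word, and no braid relations are needed.

It follows that `∂_u ∂_v` is `∂_{uv}` if lengths add up and `0` otherwise. As `∂_{w₀}` maps the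
staircase monomial to `1`, `∂_u 𝔖_w` is `1` for `u = w` and `0` for every other `u` with
`ℓ(w) ≤ ℓ(u)`. This triangular pairing makes the Schubert polynomials a basis of `R` over the
symmetric polynomials: independence is immediate, and a polynomial `f` killed by all `∂_u` with
`ℓ(u) > k` has symmetric coefficients `∂_u f` for `ℓ(u) = k`, which can be subtracted off. The
`1 ⊗ 𝔖_w` then form a left basis of the tensor product, and `S_w` differs from `1 ⊗ 𝔖_w` by a
combination of the `1 ⊗ 𝔖_u` with `ℓ(u) < ℓ(w)`.
-/

section Unitriangular

variable {ι A M α : Type*} [Ring A] [AddCommGroup M] [Module A M]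

theorem linearIndependent_of_triangular_pairing [LinearOrder α] {N : Type*} [AddCommGroup N]
    [Module A N] {v : ι → M} (d : ι → α) (D : ι → M →ₗ[A] N)
    (hdiag : ∀ i (c : A), c • D i (v i) = 0 → c = 0)
    (hoff : ∀ i j, i ≠ j → d j ≤ d i → D i (v j) = 0) : LinearIndependent A v := by
  classical
  rw [linearIndependent_iff']
  intro s c hc
  by_contra! hne
  obtain ⟨i, hi, hmax⟩ := Finset.exists_max_image {j ∈ s | c j ≠ 0} d
    (by simpa [Finset.Nonempty] using hne)
  simp only [Finset.mem_filter, and_imp] at hi hmax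
  have hDi : c i • D i (v i) = 0 := by
    have := congrArg (D i) hc
    rw [map_sum, map_zero, Finset.sum_eq_single_of_mem i hi.1, map_smul] at this
    · exact this
    · intro j hjs hji
      by_cases hj : c j = 0
      · rw [hj, zero_smul, map_zero]
      · rw [map_smul, hoff i j hji.symm (hmax j hjs hj), smul_zero]
  exact hi.2 (hdiag i _ hDi)

theorem span_range_le_of_sub_mem_span_lt [Preorder α] [WellFoundedLT α] {b v : ι → M}
    (d : ι → α) (h : ∀ i, v i - b i ∈ Submodule.span A (b '' {j | d j < d i})) :
    Submodule.span A (Set.range b) ≤ Submodule.span A (Set.range v) := by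
  suffices hb : ∀ i, b i ∈ Submodule.span A (Set.range v) by
    rw [Submodule.span_le]
    rintro _ ⟨i, rfl⟩
    exact hb i
  intro i
  induction i using (InvImage.wf d wellFounded_lt).induction with
  | _ i ih =>
    have hlower : Submodule.span A (b '' {j | d j < d i}) ≤ Submodule.span A (Set.range v) := by
      rw [Submodule.span_le]
      rintro _ ⟨j, hj, rfl⟩
      exact ih j hj
    have hv : v i ∈ Submodule.span A (Set.range v) := Submodule.subset_span ⟨i, rfl⟩
    simpa using Submodule.sub_mem _ hv (hlower (h i))

theorem linearIndependent_of_sub_mem_span_lt [LinearOrder α] (b : Module.Basis ι A M) {v : ι → M}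
    (d : ι → α) (h : ∀ i, v i - b i ∈ Submodule.span A (b '' {j | d j < d i})) :
    LinearIndependent A v := by
  classical
  have hcoord : ∀ i j, d j ≤ d i → b.coord i (v j) = if j = i then 1 else 0 := by
    intro i j hle
    have hlower : Submodule.span A (b '' {k | d k < d j}) ≤ LinearMap.ker (b.coord i) := by
      rw [Submodule.span_le]
      rintro _ ⟨k, hk, rfl⟩
      have hki : k ≠ i := by
        rintro rfl
        exact hle.not_gt hk
      simp [hki]
    have hzero := hlower (h j)
    rw [LinearMap.mem_ker, map_sub, sub_eq_zero] at hzero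
    rw [hzero, Module.Basis.coord_apply, b.repr_self_apply]
  refine linearIndependent_of_triangular_pairing d b.coord (fun i c hc => ?_) fun i j hij hle => ?_
  · simpa [hcoord] using hc
  · rw [hcoord i j hle, if_neg hij.symm]

end Unitriangular

section Length

variable {n : ℕ} {a b : Fin n} {w : Equiv.Perm (Fin n)}

open Equiv (swap)

theorem swap_lt_swap_iff_of_covBy {α : Type*} [LinearOrder α] {a b x y : α} (hab : a ⋖ b)
    (hxy : ¬(x = a ∧ y = b)) (hyx : ¬(x = b ∧ y = a)) :
    swap a b x < swap a b y ↔ x < y := by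
  have hlt : ∀ z, z < b ↔ z ≤ a := fun z => hab.lt_iff_le_left
  have hgt : ∀ z, a < z ↔ b ≤ z := fun z => hab.lt_iff_le_right
  simp only [Equiv.swap_apply_def]
  grind

theorem mem_invSet {p : Fin n × Fin n} : p ∈ invSet n w ↔ p.1 < p.2 ∧ w p.2 < w p.1 := by
  simp [invSet]

theorem invSet_swap_mul (hab : a ⋖ b) (h : w⁻¹ a < w⁻¹ b) :
    invSet n (swap a b * w) = insert (w⁻¹ a, w⁻¹ b) (invSet n w) := by
  ext ⟨p, q⟩
  simp only [Finset.mem_insert, mem_invSet, Prod.mk.injEq, Equiv.Perm.mul_apply,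
    Equiv.Perm.eq_inv_iff_eq]
  by_cases hpq : w p = a ∧ w q = b
  · obtain ⟨rfl, rfl⟩ := hpq
    simp_all [hab.lt]
  by_cases hqp : w q = a ∧ w p = b
  · obtain ⟨rfl, rfl⟩ := hqp
    simp_all [hab.lt.ne', lt_asymm]
  · rw [swap_lt_swap_iff_of_covBy hab (by tauto) (by tauto)]
    tauto

theorem notMem_invSet_of_covBy (hab : a ⋖ b) : (w⁻¹ a, w⁻¹ b) ∉ invSet n w := by
  simp [mem_invSet, hab.lt.le]

theorem len_swap_mul_of_lt (hab : a ⋖ b) (h : w⁻¹ a < w⁻¹ b) :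
    len n (swap a b * w) = len n w + 1 := by
  rw [len, invSet_swap_mul hab h, Finset.card_insert_of_notMem (notMem_invSet_of_covBy hab), len]

theorem len_eq_len_swap_mul_add_one (hab : a ⋖ b) (h : w⁻¹ b < w⁻¹ a) :
    len n w = len n (swap a b * w) + 1 := by
  simpa using len_swap_mul_of_lt (w := swap a b * w) hab (by simpa using h)

theorem inv_lt_or_inv_gt (hab : a ⋖ b) (w : Equiv.Perm (Fin n)) :
    w⁻¹ a < w⁻¹ b ∨ w⁻¹ b < w⁻¹ a :=
  (w⁻¹.injective.ne hab.lt.ne).lt_or_gt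

theorem len_swap_mul_le (hab : a ⋖ b) (w : Equiv.Perm (Fin n)) :
    len n (swap a b * w) ≤ len n w + 1 := by
  rcases inv_lt_or_inv_gt hab w with h | h
  · exact (len_swap_mul_of_lt hab h).le
  · have := len_eq_len_swap_mul_add_one hab h
    omega

theorem invSet_one (n : ℕ) : invSet n 1 = ∅ :=
  Finset.eq_empty_of_forall_notMem fun _ hp => (mem_invSet.mp hp).1.asymm (mem_invSet.mp hp).2

theorem len_one (n : ℕ) : len n 1 = 0 := by
  rw [len, invSet_one, Finset.card_empty]

theorem perm_eq_one_of_strictMono {α : Type*} [LinearOrder α] [WellFoundedLT α]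
    {w : Equiv.Perm α} (h : StrictMono w) : w = 1 :=
  DFunLike.coe_injective <|
    (h.range_inj strictMono_id).mp (by simp [w.surjective.range_eq])

theorem exists_descent (hw : w ≠ 1) : ∃ a b, a ⋖ b ∧ w⁻¹ b < w⁻¹ a := by
  by_contra! hasc
  refine hw (inv_eq_one.mp (perm_eq_one_of_strictMono ?_))
  refine strictMono_of_lt_succ fun a ha => ?_
  have hcov := Order.covBy_succ_of_not_isMax ha
  exact (inv_lt_or_inv_gt hcov w).resolve_right (hasc _ _ hcov).not_gt

theorem perm_induction_on_ascents {P : Equiv.Perm (Fin n) → Prop} (one : P 1)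
    (swap_mul : ∀ a b v, a ⋖ b → v⁻¹ a < v⁻¹ b → P v → P (swap a b * v))
    (w : Equiv.Perm (Fin n)) : P w := by
  induction hk : len n w using Nat.strong_induction_on generalizing w with
  | _ k ih =>
    by_cases hw : w = 1
    · exact hw ▸ one
    obtain ⟨a, b, hab, h⟩ := exists_descent hw
    have hlen := len_eq_len_swap_mul_add_one hab h
    simpa using swap_mul a b (swap a b * w) hab (by simpa using h) (ih _ (by omega) _ rfl)

theorem eq_one_of_len_eq_zero (h : len n w = 0) : w = 1 := by
  by_contra hw
  obtain ⟨a, b, hab, hdesc⟩ := exists_descent hw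
  have := len_eq_len_swap_mul_add_one hab hdesc
  omega

theorem len_mul_swap_lt_of_mem_invSet {p : Fin n × Fin n} (hp : p ∈ invSet n w) :
    len n (w * swap p.1 p.2) < len n w := by
  induction w using perm_induction_on_ascents with
  | one => simp [invSet_one] at hp
  | swap_mul a b v hab h ih =>
    rw [len_swap_mul_of_lt hab h]
    rw [invSet_swap_mul hab h, Finset.mem_insert] at hp
    rcases hp with rfl | hp
    · rw [mul_assoc, Equiv.mul_swap_eq_swap_mul]
      simp
    · have hle := len_swap_mul_le hab (v * swap p.1 p.2)
      have hlt := ih hp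
      rw [mul_assoc]
      omega

end Length

section ReducedWords

variable {n : ℕ} {a b : Fin n} {w v : Equiv.Perm (Fin n)}

open Equiv (swap)

theorem exists_covBy_of_lt {i : ℕ} (hi : i + 1 < n) : ∃ a b : Fin n, a ⋖ b ∧ (a : ℕ) = i :=
  ⟨⟨i, by omega⟩, ⟨i + 1, hi⟩, by simp, rfl⟩

theorem val_add_one_lt_of_covBy (hab : a ⋖ b) : (a : ℕ) + 1 < n := by
  simp only [Fin.covBy_iff, Nat.covBy_iff_add_one_eq] at hab
  omega

theorem simpleRefl_of_covBy (hab : a ⋖ b) : simpleRefl n a = swap a b := by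
  have hb : (⟨a + 1, val_add_one_lt_of_covBy hab⟩ : Fin n) = b := by
    simpa [Fin.ext_iff] using hab
  simp [simpleRefl, val_add_one_lt_of_covBy hab, hb]

theorem simpleRefl_of_not_lt {i : ℕ} (hi : ¬i + 1 < n) : simpleRefl n i = 1 :=
  dif_neg hi

theorem isReducedWord_nil (n : ℕ) : IsReducedWord n 1 [] := by
  simp [IsReducedWord, len_one]

theorem IsReducedWord.cons {l : List ℕ} (hl : IsReducedWord n v l) (hab : a ⋖ b)
    (h : v⁻¹ a < v⁻¹ b) : IsReducedWord n (swap a b * v) (a :: l) := by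
  constructor
  · rw [List.map_cons, List.prod_cons, hl.1, simpleRefl_of_covBy hab]
  · rw [List.length_cons, hl.2, len_swap_mul_of_lt hab h]

theorem exists_isReducedWord (w : Equiv.Perm (Fin n)) : ∃ l, IsReducedWord n w l := by
  induction w using perm_induction_on_ascents with
  | one => exact ⟨[], isReducedWord_nil n⟩
  | swap_mul a b v hab h ih =>
    obtain ⟨l, hl⟩ := ih
    exact ⟨a :: l, hl.cons hab h⟩

theorem len_prod_le_length (n : ℕ) (l : List ℕ) :
    len n (l.map (simpleRefl n)).prod ≤ l.length := by
  induction l with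
  | nil => simp [len_one]
  | cons i l ih =>
    rw [List.map_cons, List.prod_cons, List.length_cons]
    by_cases hi : i + 1 < n
    · obtain ⟨a, b, hab, rfl⟩ := exists_covBy_of_lt hi
      rw [simpleRefl_of_covBy hab]
      exact (len_swap_mul_le hab _).trans (by omega)
    · rw [simpleRefl_of_not_lt hi, one_mul]
      omega

theorem IsReducedWord.exists_of_cons {i : ℕ} {l : List ℕ} (h : IsReducedWord n w (i :: l)) :
    ∃ (a b : Fin n) (v : Equiv.Perm (Fin n)), a ⋖ b ∧ v⁻¹ a < v⁻¹ b ∧ IsReducedWord n v l ∧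
      (a : ℕ) = i ∧ swap a b * v = w := by
  obtain ⟨hprod, hlen⟩ := h
  have hle := len_prod_le_length n l
  rw [List.map_cons, List.prod_cons] at hprod
  rw [List.length_cons, ← hprod] at hlen
  by_cases hi : i + 1 < n
  · obtain ⟨a, b, hab, rfl⟩ := exists_covBy_of_lt hi
    rw [simpleRefl_of_covBy hab] at hprod hlen
    rcases inv_lt_or_inv_gt hab (l.map (simpleRefl n)).prod with hasc | hdesc
    · have := len_swap_mul_of_lt hab hasc
      exact ⟨a, b, _, hab, hasc, ⟨rfl, by omega⟩, rfl, hprod⟩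
    · have := len_eq_len_swap_mul_add_one hab hdesc
      omega
  · rw [simpleRefl_of_not_lt hi, one_mul] at hlen
    omega

end ReducedWords
section DemazureOperators

variable {n : ℕ} {a b : Fin n} {f g : R n}

open Equiv (swap)

theorem X_sub_X_dvd_sub_rename_swap {σ A : Type*} [DecidableEq σ] [CommRing A] (a b : σ)
    (f : MvPolynomial σ A) : (X a - X b : MvPolynomial σ A) ∣ f - rename (swap a b) f := by
  induction f using MvPolynomial.induction_on with
  | C r => simp
  | add p q hp hq => simpa only [map_add, add_sub_add_comm] using dvd_add hp hq
  | mul_X p i hp =>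
    have hX : (X a - X b : MvPolynomial σ A) ∣ X i - X (swap a b i) := by
      rw [Equiv.swap_apply_def]
      split_ifs with hia hib
      · rw [hia]
      · rw [hib, dvd_sub_comm]
      · rw [sub_self]
        exact dvd_zero _
    have hsplit : p * X i - rename (swap a b) (p * X i) =
        (p - rename (swap a b) p) * X i + rename (swap a b) p * (X i - X (swap a b i)) := by
      rw [map_mul, rename_X]
      ring
    rw [hsplit]
    exact dvd_add (hp.mul_right _) (hX.mul_left _)

theorem X_sub_X_mul_demX (hab : a ⋖ b) (f : R n) :
    (X a - X b) * demX n a f = f - rename (swap a b) f := by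
  have hb : (⟨a + 1, val_add_one_lt_of_covBy hab⟩ : Fin n) = b := by
    simpa [Fin.ext_iff] using hab
  have hdvd := X_sub_X_dvd_sub_rename_swap a b f
  simp only [demX, val_add_one_lt_of_covBy hab, ↓reduceDIte, Fin.eta, hb, hdvd]
  exact hdvd.choose_spec.symm

theorem demX_of_not_lt {i : ℕ} (hi : ¬i + 1 < n) (f : R n) : demX n i f = 0 :=
  dif_neg hi

theorem demX_eq_iff (hab : a ⋖ b) :
    demX n a f = g ↔ (X a - X b) * g = f - rename (swap a b) f := by
  have hroot : (X a - X b : R n) ≠ 0 := sub_ne_zero.mpr (X_injective.ne hab.ne)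
  rw [← X_sub_X_mul_demX hab, mul_right_inj' hroot, eq_comm]

theorem demX_eq_zero_iff (hab : a ⋖ b) : demX n a f = 0 ↔ rename (swap a b) f = f := by
  rw [demX_eq_iff hab, mul_zero, eq_comm, sub_eq_zero, eq_comm]

theorem demX_mul (hab : a ⋖ b) (f g : R n) :
    demX n a (f * g) = demX n a f * g + rename (swap a b) f * demX n a g := by
  rw [demX_eq_iff hab, map_mul]
  linear_combination g * X_sub_X_mul_demX hab f +
    rename (swap a b) f * X_sub_X_mul_demX hab g

theorem demX_demX (i : ℕ) (f : R n) : demX n i (demX n i f) = 0 := by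
  by_cases hi : i + 1 < n
  · obtain ⟨a, b, hab, rfl⟩ := exists_covBy_of_lt hi
    have hspec := X_sub_X_mul_demX hab f
    have hroot : (X a - X b : R n) ≠ 0 := sub_ne_zero.mpr (X_injective.ne hab.ne)
    have hswap := congrArg (rename (swap a b)) hspec
    rw [demX_eq_zero_iff hab]
    simp only [map_mul, map_sub, rename_X, Equiv.swap_apply_left, Equiv.swap_apply_right,
      rename_rename, ← Equiv.coe_trans, Equiv.swap_swap, Equiv.coe_refl, rename_id_apply] at hswap
    exact mul_left_cancel₀ hroot (by linear_combination -hspec - hswap)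
  · exact demX_of_not_lt hi _

/-- The Demazure operator `∂_i` as a linear map over the symmetric polynomials. -/
def demXLinear (n i : ℕ) : R n →ₗ[Ssub n] R n where
  toFun := demX n i
  map_add' f g := by
    by_cases hi : i + 1 < n
    · obtain ⟨a, b, hab, rfl⟩ := exists_covBy_of_lt hi
      rw [demX_eq_iff hab, map_add]
      linear_combination X_sub_X_mul_demX hab f + X_sub_X_mul_demX hab g
    · simp only [demX_of_not_lt hi, add_zero]
  map_smul' s f := by
    by_cases hi : i + 1 < n
    · obtain ⟨a, b, hab, rfl⟩ := exists_covBy_of_lt hi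
      have hs : rename (swap a b) (s : R n) = s := s.2 (swap a b)
      rw [RingHom.id_apply, Subalgebra.smul_def, Subalgebra.smul_def, smul_eq_mul, smul_eq_mul,
        demX_mul hab, (demX_eq_zero_iff hab).mpr hs, hs, zero_mul, zero_add]
    · simp only [demX_of_not_lt hi, smul_zero]

@[simp]
theorem demXLinear_apply (n i : ℕ) (f : R n) : demXLinear n i f = demX n i f := rfl

/-- The composite Demazure operator along a word as a linear map over the symmetric
polynomials. -/
def demWordLinear (n : ℕ) (l : List ℕ) : R n →ₗ[Ssub n] R n :=
  (l.map (demXLinear n)).prod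

@[simp]
theorem demWordLinear_apply (n : ℕ) (l : List ℕ) (f : R n) :
    demWordLinear n l f = demWord n l f := by
  induction l with
  | nil => rfl
  | cons i l ih => exact congrArg (demX n i) ih

theorem demX_C (i : ℕ) (r : ℂ) : demX n i (C r) = 0 := by
  by_cases hi : i + 1 < n
  · obtain ⟨a, b, hab, rfl⟩ := exists_covBy_of_lt hi
    rw [demX_eq_zero_iff hab, rename_C]
  · exact demX_of_not_lt hi _

/-- The pairing of the variable `x_c` with the coroot of the transposition exchanging the two
entries of `p`; it is the coefficient of the corresponding term in the Leibniz rule. -/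
def corootPairing (c : Fin n) (p : Fin n × Fin n) : ℤ :=
  (if c = p.1 then 1 else 0) - (if c = p.2 then 1 else 0)

theorem demX_X (hab : a ⋖ b) (c : Fin n) : demX n a (X c) = corootPairing c (a, b) := by
  rw [demX_eq_iff hab, rename_X, corootPairing]
  have := hab.ne
  by_cases hca : c = a
  · subst hca
    simp [this]
  by_cases hcb : c = b
  · subst hcb
    simp [hca]
  · simp [hca, hcb, Equiv.swap_apply_of_ne_of_ne]

theorem demX_X_mul (hab : a ⋖ b) (c : Fin n) (f : R n) :
    demX n a (X c * f) = corootPairing c (a, b) • f + X (swap a b c) * demX n a f := by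
  rw [demX_mul hab, demX_X hab, rename_X, zsmul_eq_mul]

end DemazureOperators

section Independence

variable {n k : ℕ} {a b : Fin n} {w v : Equiv.Perm (Fin n)} {l : List ℕ}

open Equiv (swap)

/-- The operator `∂_w` computed from any reduced word of any permutation of length at most `k`
is the one obtained from the word chosen by `dem`. -/
def WordIndependent (n k : ℕ) : Prop :=
  ∀ (w : Equiv.Perm (Fin n)) (l : List ℕ),
    len n w ≤ k → IsReducedWord n w l → demWord n l = dem n w

theorem exists_isReducedWord_dem_eq (w : Equiv.Perm (Fin n)) :
    ∃ l, IsReducedWord n w l ∧ dem n w = demWord n l := by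
  have h := exists_isReducedWord w
  exact ⟨h.choose, h.choose_spec, dif_pos h⟩

theorem WordIndependent.dem_swap_mul (hk : WordIndependent n k) (hab : a ⋖ b)
    (h : v⁻¹ a < v⁻¹ b) (hv : len n v < k) (f : R n) :
    dem n (swap a b * v) f = demX n a (dem n v f) := by
  obtain ⟨l, hl⟩ := exists_isReducedWord v
  have hlen := len_swap_mul_of_lt hab h
  rw [← hk _ _ (by omega) (hl.cons hab h), ← hk v l (by omega) hl]
  rfl

theorem WordIndependent.demX_dem_of_gt (hk : WordIndependent n k) (hab : a ⋖ b)
    (h : v⁻¹ b < v⁻¹ a) (hv : len n v ≤ k) (f : R n) : demX n a (dem n v f) = 0 := by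
  have hlen := len_eq_len_swap_mul_add_one hab h
  have hdem := hk.dem_swap_mul (v := swap a b * v) hab (by simpa using h) (by omega) f
  rw [Equiv.swap_mul_self_mul] at hdem
  rw [hdem, demX_demX]

/-- The correction term in the Leibniz rule for `∂_w (x_c f)`: the sum over the inversions `(i, j)`
of `w` for which `w t_{ij}` is covered by `w` in the Bruhat order. -/
def leibnizDefect (n : ℕ) (w : Equiv.Perm (Fin n)) (c : Fin n) (f : R n) : R n :=
  ∑ p ∈ invSet n w with len n (w * swap p.1 p.2) + 1 = len n w,
    corootPairing c p • dem n (w * swap p.1 p.2) f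

theorem WordIndependent.leibnizDefect_swap_mul (hk : WordIndependent n k) (hab : a ⋖ b)
    (h : v⁻¹ a < v⁻¹ b) (hv : len n v ≤ k) (c : Fin n) (f : R n) :
    leibnizDefect n (swap a b * v) c f =
      corootPairing (v c) (a, b) • dem n v f + demX n a (leibnizDefect n v c f) := by
  have hterm : ∀ p ∈ invSet n v,
      (if len n (swap a b * v * swap p.1 p.2) + 1 = len n (swap a b * v) then
        corootPairing c p • dem n (swap a b * v * swap p.1 p.2) f else 0) =
      demXLinear n a (if len n (v * swap p.1 p.2) + 1 = len n v then
        corootPairing c p • dem n (v * swap p.1 p.2) f else 0) := by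
    intro p hp
    have hlt := len_mul_swap_lt_of_mem_invSet hp
    rw [len_swap_mul_of_lt hab h, mul_assoc]
    rcases inv_lt_or_inv_gt hab (v * swap p.1 p.2) with hasc | hdesc
    · simp only [len_swap_mul_of_lt hab hasc, add_left_inj]
      split_ifs
      · rw [map_zsmul, demXLinear_apply, hk.dem_swap_mul hab hasc (by omega)]
      · rw [map_zero]
    · have hlen := len_eq_len_swap_mul_add_one hab hdesc
      rw [if_neg (by omega)]
      split_ifs
      · rw [map_zsmul, demXLinear_apply, hk.demX_dem_of_gt hab hdesc (by omega), smul_zero]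
      · rw [map_zero]
  have hnew : swap a b * v * swap (v⁻¹ a) (v⁻¹ b) = v := by
    rw [mul_assoc, Equiv.mul_swap_eq_swap_mul]
    simp
  have hpair : corootPairing c (v⁻¹ a, v⁻¹ b) = corootPairing (v c) (a, b) := by
    simp only [corootPairing, Equiv.Perm.eq_inv_iff_eq]
  rw [leibnizDefect, leibnizDefect, Finset.sum_filter, Finset.sum_filter, invSet_swap_mul hab h,
    Finset.sum_insert (notMem_invSet_of_covBy hab), Finset.sum_congr rfl hterm,
    hnew, hpair, if_pos (len_swap_mul_of_lt hab h).symm, ← map_sum, demXLinear_apply]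

theorem WordIndependent.demWord_X_mul (hk : WordIndependent n k) (hl : IsReducedWord n w l)
    (hw : len n w ≤ k + 1) (c : Fin n) (f : R n) :
    demWord n l (X c * f) = X (w c) * demWord n l f + leibnizDefect n w c f := by
  induction l generalizing w with
  | nil =>
    obtain rfl : w = 1 := hl.1.symm
    simp [demWord, leibnizDefect, invSet_one]
  | cons i l ih =>
    obtain ⟨a, b, v, hab, h, hv, rfl, rfl⟩ := hl.exists_of_cons
    have hlen := len_swap_mul_of_lt hab h
    calc demX n a (demWord n l (X c * f))
        = demXLinear n a (X (v c) * demWord n l f + leibnizDefect n v c f) := by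
          rw [ih hv (by omega), demXLinear_apply]
      _ = X ((swap a b * v) c) * demX n a (demWord n l f) +
            (corootPairing (v c) (a, b) • dem n v f + demX n a (leibnizDefect n v c f)) := by
          rw [map_add, demXLinear_apply, demXLinear_apply, demX_X_mul hab,
            hk v l (by omega) hv, Equiv.Perm.mul_apply]
          ring
      _ = _ := by
          rw [← hk.leibnizDefect_swap_mul hab h (by omega)]
          rfl

theorem demWord_cons_C (n i : ℕ) (l : List ℕ) (r : ℂ) : demWord n (i :: l) (C r) = 0 := by
  induction l generalizing i with
  | nil => exact demX_C i r
  | cons j l ih =>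
    calc demX n i (demWord n (j :: l) (C r)) = demXLinear n i 0 := by
          rw [ih, demXLinear_apply]
      _ = 0 := map_zero _

theorem wordIndependent (n k : ℕ) : WordIndependent n k := by
  induction k with
  | zero =>
    intro w l hw hl
    obtain ⟨l', hl', hdem⟩ := exists_isReducedWord_dem_eq w
    have hnil : ∀ m, IsReducedWord n w m → m = [] := fun m hm =>
      List.eq_nil_of_length_eq_zero (by have := hm.2; omega)
    rw [hdem, hnil l hl, hnil l' hl']
  | succ k ih =>
    intro w l hw hl
    obtain ⟨l', hl', hdem⟩ := exists_isReducedWord_dem_eq w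
    rw [hdem]
    funext f
    induction f using MvPolynomial.induction_on with
    | C r =>
      have hlength : l.length = l'.length := hl.2.trans hl'.2.symm
      cases l <;> cases l'
      · rfl
      · simp at hlength
      · simp at hlength
      · rw [demWord_cons_C, demWord_cons_C]
    | add p q hp hq =>
      simp only [← demWordLinear_apply, map_add] at hp hq ⊢
      rw [hp, hq]
    | mul_X p c hp =>
      rw [mul_comm, ih.demWord_X_mul hl hw, ih.demWord_X_mul hl' hw, hp]

end Independence

section DemazureOfPermutation

variable {n : ℕ} {a b : Fin n} {w : Equiv.Perm (Fin n)} {l : List ℕ}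

open Equiv (swap)

theorem IsReducedWord.demWord_eq_dem (hl : IsReducedWord n w l) : demWord n l = dem n w :=
  wordIndependent n _ w l le_rfl hl

/-- The Demazure operator `∂_w` as a linear map over the symmetric polynomials. -/
def demLinear (n : ℕ) (w : Equiv.Perm (Fin n)) : R n →ₗ[Ssub n] R n where
  toFun := dem n w
  map_add' f g := by
    obtain ⟨l, -, hdem⟩ := exists_isReducedWord_dem_eq w
    simp only [hdem, ← demWordLinear_apply, map_add]
  map_smul' s f := by
    obtain ⟨l, -, hdem⟩ := exists_isReducedWord_dem_eq w
    simp only [hdem, ← demWordLinear_apply, map_smul, RingHom.id_apply]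

@[simp]
theorem demLinear_apply (w : Equiv.Perm (Fin n)) (f : R n) : demLinear n w f = dem n w f := rfl

theorem dem_one (f : R n) : dem n 1 f = f := by
  rw [← (isReducedWord_nil n).demWord_eq_dem]
  rfl

theorem demX_dem (hab : a ⋖ b) (v : Equiv.Perm (Fin n)) (f : R n) :
    demX n a (dem n v f) = if v⁻¹ a < v⁻¹ b then dem n (swap a b * v) f else 0 := by
  split_ifs with h
  · exact ((wordIndependent n _).dem_swap_mul hab h (Nat.lt_succ_self _) f).symm
  · exact (wordIndependent n _).demX_dem_of_gt hab
      ((inv_lt_or_inv_gt hab v).resolve_left h) le_rfl f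

theorem demWord_eq_ite (l : List ℕ) (f : R n) :
    demWord n l f = if len n (l.map (simpleRefl n)).prod = l.length then
      dem n (l.map (simpleRefl n)).prod f else 0 := by
  induction l with
  | nil => simp [demWord, len_one, dem_one]
  | cons i l ih =>
    have hle := len_prod_le_length n l
    change demX n i (demWord n l f) = _
    rw [ih, List.map_cons, List.prod_cons, List.length_cons]
    by_cases hi : i + 1 < n
    · obtain ⟨a, b, hab, rfl⟩ := exists_covBy_of_lt hi
      rw [apply_ite (demX n a), demX_dem hab, ← demXLinear_apply, map_zero,
        simpleRefl_of_covBy hab]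
      rcases inv_lt_or_inv_gt hab (l.map (simpleRefl n)).prod with hasc | hdesc
      · rw [if_pos hasc, len_swap_mul_of_lt hab hasc]
        simp only [add_left_inj]
      · have hlen := len_eq_len_swap_mul_add_one hab hdesc
        rw [if_neg hdesc.not_gt, ite_self, if_neg (by omega)]
    · rw [demX_of_not_lt hi, simpleRefl_of_not_lt hi, one_mul, if_neg (by omega)]

theorem demWord_append (l m : List ℕ) (f : R n) :
    demWord n (l ++ m) f = demWord n l (demWord n m f) :=
  List.foldr_append

theorem dem_dem (u v : Equiv.Perm (Fin n)) (f : R n) :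
    dem n u (dem n v f) = if len n (u * v) = len n u + len n v then dem n (u * v) f else 0 := by
  obtain ⟨l, hl⟩ := exists_isReducedWord u
  obtain ⟨m, hm⟩ := exists_isReducedWord v
  rw [← hl.demWord_eq_dem, ← hm.demWord_eq_dem, ← demWord_append, demWord_eq_ite,
    List.map_append, List.prod_append, List.length_append, hl.1, hm.1, hl.2, hm.2]

end DemazureOfPermutation

section LongestElement

variable {n : ℕ} {w : Equiv.Perm (Fin n)}

theorem len_inv (w : Equiv.Perm (Fin n)) : len n w⁻¹ = len n w := by
  refine Finset.card_nbij' (fun p => (w⁻¹ p.2, w⁻¹ p.1)) (fun p => (w p.2, w p.1)) ?_ ?_ ?_ ?_ <;>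
    simp +contextual [Set.MapsTo, Set.LeftInvOn, mem_invSet]

theorem len_mul_w₀_add_len (w : Equiv.Perm (Fin n)) :
    len n (w * w₀ n) + len n w = len n (w₀ n) := by
  have hcompl : len n (w * w₀ n) =
      Finset.card {p ∈ invSet n (w₀ n) | ¬w p.2 < w p.1} := by
    refine Finset.card_nbij' (fun p => (p.2.rev, p.1.rev)) (fun p => (p.2.rev, p.1.rev))
      ?_ ?_ ?_ ?_ <;>
    simp +contextual [Set.MapsTo, Set.LeftInvOn, mem_invSet, w₀, le_of_lt, lt_iff_le_and_ne,
      ne_of_lt]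
  have hinv : len n w = Finset.card {p ∈ invSet n (w₀ n) | w p.2 < w p.1} := by
    refine congrArg Finset.card (Finset.ext fun p => ?_)
    simp [mem_invSet, w₀]
  rw [hcompl, hinv, add_comm, Finset.card_filter_add_card_filter_not, len]

theorem len_inv_mul_w₀_add_len (w : Equiv.Perm (Fin n)) :
    len n (w⁻¹ * w₀ n) + len n w = len n (w₀ n) := by
  rw [← len_inv w, len_mul_w₀_add_len]

theorem eq_w₀_of_len_eq (h : len n w = len n (w₀ n)) : w = w₀ n := by
  have := len_mul_w₀_add_len w
  rw [eq_inv_of_mul_eq_one_left (eq_one_of_len_eq_zero (by omega : len n (w * w₀ n) = 0))]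
  rfl

theorem len_w₀ (n : ℕ) : len n (w₀ n) = ∑ i : Fin n, (n - 1 - (i : ℕ)) := by
  have hinv : invSet n (w₀ n) = Finset.univ.filter fun p => p.1 < p.2 := by
    ext p
    simp [mem_invSet, w₀]
  rw [len, hinv, Finset.card_filter, Fintype.sum_prod_type]
  simp only [← Finset.card_filter, Finset.filter_lt_eq_Ioi, Fin.card_Ioi]

end LongestElement

section Staircase

variable {n : ℕ} {a b : Fin n} {f : R n}

open Equiv (swap)

theorem demX_X_mul_of_rename_swap_eq (hab : a ⋖ b) (hf : rename (swap a b) f = f) :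
    demX n a (X a * f) = f := by
  rw [demX_eq_iff hab, map_mul, hf, rename_X, Equiv.swap_apply_left, sub_mul]

theorem rename_swap_prod_X_pow {e : Fin n → ℕ} (he : e a = e b) :
    rename (swap a b) (∏ i, X i ^ e i : R n) = ∏ i, X i ^ e i := by
  simp only [map_prod, map_pow, rename_X]
  refine Fintype.prod_equiv (swap a b) _ _ fun i => ?_
  congr 1
  rw [Equiv.swap_apply_def]
  split_ifs with hia hib
  · rw [hia, he]
  · rw [hib, he]
  · rfl

theorem demX_prod_X_pow (hab : a ⋖ b) {e e' : Fin n → ℕ} (he' : e' a = e' b)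
    (ha : e a = e' a + 1) (he : ∀ i ≠ a, e i = e' i) :
    demX n a (∏ i, X i ^ e i) = ∏ i, X i ^ e' i := by
  have hfactor : (∏ i, X i ^ e i : R n) = X a * ∏ i, X i ^ e' i := by
    rw [← Finset.mul_prod_erase _ _ (Finset.mem_univ a),
      ← Finset.mul_prod_erase _ (fun i => X i ^ e' i) (Finset.mem_univ a), ha, pow_succ',
      mul_assoc]
    congr 2
    exact Finset.prod_congr rfl fun i hi => by rw [he i (Finset.ne_of_mem_erase hi)]
  rw [hfactor, demX_X_mul_of_rename_swap_eq hab (rename_swap_prod_X_pow he')]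

theorem demWord_range_reverse_prod_X_pow {m r : ℕ} (hr : r ≤ m) (hm : m ≤ n - 1) :
    demWord n (List.range r).reverse (∏ i : Fin n, X i ^ (m - (i : ℕ))) =
      ∏ i : Fin n, X i ^ (if (i : ℕ) < r then m - 1 - (i : ℕ) else m - (i : ℕ)) := by
  induction r with
  | zero => simp [demWord]
  | succ r ih =>
    obtain ⟨a, b, hab, rfl⟩ := exists_covBy_of_lt (by omega : r + 1 < n)
    have hb : (a : ℕ) + 1 = b := by simpa using hab
    rw [List.range_succ, List.reverse_append, List.reverse_singleton, List.singleton_append]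
    change demX n a (demWord n (List.range a).reverse _) = _
    rw [ih (by omega)]
    refine demX_prod_X_pow hab ?_ ?_ fun i hi => ?_
    · grind
    · grind
    · have : (i : ℕ) ≠ a := Fin.val_ne_of_ne hi
      grind

/-- The word `[0] ++ [1, 0] ++ [2, 1, 0] ++ ⋯` with `m` blocks. For `m = n - 1` it is a reduced
word of `w₀ n` along which the staircase monomial is lowered to `1`. -/
def staircaseWord : ℕ → List ℕ
  | 0 => []
  | m + 1 => staircaseWord m ++ (List.range (m + 1)).reverse

theorem length_staircaseWord (m : ℕ) :
    (staircaseWord m).length = ∑ i ∈ Finset.range (m + 1), i := by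
  induction m with
  | zero => rfl
  | succ m ih => simp [staircaseWord, ih, Finset.sum_range_succ _ (m + 1)]

theorem demWord_staircaseWord {m : ℕ} (hm : m ≤ n - 1) :
    demWord n (staircaseWord m) (∏ i : Fin n, X i ^ (m - (i : ℕ))) = 1 := by
  induction m with
  | zero => simp [demWord, staircaseWord]
  | succ m ih =>
    have hlower : ∀ i : Fin n,
        (if (i : ℕ) < m + 1 then m + 1 - 1 - (i : ℕ) else m + 1 - (i : ℕ)) = m - i := by
      grind
    rw [staircaseWord, demWord_append, demWord_range_reverse_prod_X_pow le_rfl hm]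
    simp only [hlower]
    exact ih (by omega)

theorem length_staircaseWord_eq_len_w₀ (n : ℕ) :
    (staircaseWord (n - 1)).length = len n (w₀ n) := by
  rw [len_w₀, Fin.sum_univ_eq_sum_range (fun i => n - 1 - i),
    Finset.sum_range_reflect (fun i => i), length_staircaseWord]
  cases n <;> simp

theorem dem_w₀_staircase (n : ℕ) : dem n (w₀ n) (staircase n) = 1 := by
  have hone := (demWord_eq_ite (staircaseWord (n - 1)) (staircase n)).symm.trans
    (demWord_staircaseWord le_rfl)
  have hreduced := (ite_ne_right_iff.mp (hone.trans_ne one_ne_zero)).1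
  rwa [if_pos hreduced,
    eq_w₀_of_len_eq (hreduced.trans (length_staircaseWord_eq_len_w₀ n))] at hone

end Staircase

section SchubertBasis

variable {n k : ℕ} {u w : Equiv.Perm (Fin n)} {f : R n}

theorem dem_schubert_self (w : Equiv.Perm (Fin n)) : dem n w (schubert n w) = 1 := by
  have hlen := len_inv_mul_w₀_add_len w
  rw [schubert, dem_dem, mul_inv_cancel_left, if_pos (by omega), dem_w₀_staircase]

theorem dem_schubert_of_ne (hne : u ≠ w) (hle : len n w ≤ len n u) :
    dem n u (schubert n w) = 0 := by
  rw [schubert, dem_dem, if_neg]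
  intro hlen
  have hw := len_inv_mul_w₀_add_len w
  have hmax := len_mul_w₀_add_len (u * (w⁻¹ * w₀ n))
  have htop : u * (w⁻¹ * w₀ n) = w₀ n := eq_w₀_of_len_eq (by omega)
  rw [← mul_assoc, mul_eq_right, mul_inv_eq_one] at htop
  exact hne htop

theorem dem_sum_smul_schubert {s : Finset (Equiv.Perm (Fin n))}
    (c : Equiv.Perm (Fin n) → Ssub n) (hs : ∀ w ∈ s, len n w ≤ len n u) :
    dem n u (∑ w ∈ s, c w • schubert n w) = if u ∈ s then (c u : R n) else 0 := by
  have hterm : ∀ w ∈ s, c w • dem n u (schubert n w) = if u = w then (c w : R n) else 0 := by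
    intro w hw
    split_ifs with h
    · rw [h, dem_schubert_self, Subalgebra.smul_def, smul_eq_mul, mul_one]
    · rw [dem_schubert_of_ne h (hs w hw), smul_zero]
  rw [← demLinear_apply, map_sum]
  simp only [map_smul, demLinear_apply]
  rw [Finset.sum_congr rfl hterm, Finset.sum_ite_eq]

theorem mem_symmetricSubalgebra_of_demX_eq_zero (h : ∀ i, demX n i f = 0) : f ∈ Ssub n := by
  rw [mem_symmetricSubalgebra]
  intro w
  induction w using perm_induction_on_ascents with
  | one => exact rename_id_apply f
  | swap_mul a b v hab _ ih =>
    rw [Equiv.Perm.coe_mul, ← rename_rename, ih, (demX_eq_zero_iff hab).mp (h a)]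

theorem dem_mem_symmetricSubalgebra (h : ∀ v, len n u < len n v → dem n v f = 0) :
    dem n u f ∈ Ssub n := by
  refine mem_symmetricSubalgebra_of_demX_eq_zero fun i => ?_
  by_cases hi : i + 1 < n
  · obtain ⟨a, b, hab, rfl⟩ := exists_covBy_of_lt hi
    rw [demX_dem hab]
    split_ifs with hasc
    · exact h _ (by rw [len_swap_mul_of_lt hab hasc]; exact Nat.lt_succ_self _)
    · rfl
  · exact demX_of_not_lt hi _

theorem mem_span_schubert_of_dem_eq_zero (h : ∀ u, k ≤ len n u → dem n u f = 0) :
    f ∈ Submodule.span (Ssub n) (Set.range (schubert n)) := by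
  induction k generalizing f with
  | zero =>
    rw [← dem_one f, h 1 (Nat.zero_le _)]
    exact Submodule.zero_mem _
  | succ k ih =>
    have hsymm : ∀ u, len n u = k → ∃ c : Ssub n, (c : R n) = dem n u f := fun u hu =>
      ⟨⟨_, dem_mem_symmetricSubalgebra fun v hv => h v (by omega)⟩, rfl⟩
    choose! c hc using hsymm
    set top := ∑ w with len n w = k, c w • schubert n w
    have htop : top ∈ Submodule.span (Ssub n) (Set.range (schubert n)) :=
      Submodule.sum_mem _ fun w _ => Submodule.smul_mem _ _ (Submodule.subset_span ⟨w, rfl⟩)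
    refine (Submodule.sub_mem_iff_left _ htop).mp (ih fun u hu => ?_)
    have hdemTop : dem n u top = if len n u = k then (c u : R n) else 0 := by
      rw [dem_sum_smul_schubert c (by simp +contextual [hu])]
      simp
    rw [← demLinear_apply, map_sub, demLinear_apply, demLinear_apply, hdemTop]
    split_ifs with hk
    · rw [hc u hk, sub_self]
    · rw [h u (by omega), sub_zero]

theorem span_schubert (n : ℕ) : Submodule.span (Ssub n) (Set.range (schubert n)) = ⊤ := by
  refine Submodule.eq_top_iff'.mpr fun f =>
    mem_span_schubert_of_dem_eq_zero (k := len n (w₀ n) + 1) fun u hu => ?_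
  have := len_mul_w₀_add_len u
  omega

theorem linearIndependent_schubert (n : ℕ) : LinearIndependent (Ssub n) (schubert n) := by
  refine linearIndependent_of_triangular_pairing (len n) (demLinear n) (fun w c hc => ?_)
    fun u w hne hle => dem_schubert_of_ne hne hle
  rwa [demLinear_apply, dem_schubert_self, Subalgebra.smul_def, smul_eq_mul, mul_one,
    ZeroMemClass.coe_eq_zero] at hc

/-- The basis `{𝔖_w}` of `R` over the symmetric polynomials. -/
def schubertBasis (n : ℕ) : Module.Basis (Equiv.Perm (Fin n)) (Ssub n) (R n) :=
  .mk (linearIndependent_schubert n) (span_schubert n).ge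

/-- The basis `{1 ⊗ 𝔖_w}` of `R ⊗_{R^{S_n}} R` over the left factor. -/
def tensorSchubertBasis (n : ℕ) : Module.Basis (Equiv.Perm (Fin n)) (R n) (T n) :=
  Algebra.TensorProduct.basis (R n) (schubertBasis n)

theorem tensorSchubertBasis_apply (w : Equiv.Perm (Fin n)) :
    tensorSchubertBasis n w = 1 ⊗ₜ schubert n w := by
  rw [tensorSchubertBasis, Algebra.TensorProduct.basis_apply, schubertBasis, Module.Basis.mk_apply]

theorem Sw_sub_tensorSchubertBasis_mem_span (w : Equiv.Perm (Fin n)) :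
    Sw n w - tensorSchubertBasis n w ∈
      Submodule.span (R n) (tensorSchubertBasis n '' {u | len n u < len n w}) := by
  rw [Sw, tensorSchubertBasis_apply, add_sub_cancel_left]
  refine Submodule.sum_mem _ fun p hp => ?_
  have hlt : p.1 ∈ {u | len n u < len n w} := (Finset.mem_filter.mp hp).2.2.1
  have hmem := Submodule.subset_span (R := R n) (Set.mem_image_of_mem (tensorSchubertBasis n) hlt)
  rw [tensorSchubertBasis_apply] at hmem
  simpa only [TensorProduct.smul_tmul', smul_eq_mul, mul_one] using
    Submodule.smul_mem _ (aeval (fun i => -(X i : R n)) (schubert n p.2)) hmem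

end SchubertBasis

/-- The family `{S_w}_{w ∈ S_n}` is a basis of `R ⊗_{R^{S_n}} R`
as a free left `R`-module. -/
theorem statement4 (n : ℕ) :
    LinearIndependent (R n) (Sw n) ∧
      Submodule.span (R n) (Set.range (Sw n)) = (⊤ : Submodule (R n) (T n)) := by
  have hlower := Sw_sub_tensorSchubertBasis_mem_span (n := n)
  refine ⟨linearIndependent_of_sub_mem_span_lt (tensorSchubertBasis n) (len n) hlower, ?_⟩
  rw [eq_top_iff, ← (tensorSchubertBasis n).span_eq]
  exact span_range_le_of_sub_mem_span_lt (len n) hlower
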